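/- arXiv:1210.5263 — 7 statements merged into one kernel-verified Lean document; each statement's English description precedes it below -/
import Mathlib

section
/- Let F be an algebraically closed field and n a positive integer. If p, g ∈ F[x₁,…,xₙ] have the same zero set in Fⁿ, then there exists a polynomial d ∈ F[x₁,…,xₙ] such that d divides p, d divides g, and the zero set of d equals the common zero set of p and g. -/
theorem stmt_0 {F : Type*} [Field F] [IsAlgClosed F] (n : ℕ) (hn : 0 < n)
    (p g : MvPolynomial (Fin n) F)
    (h : {v : Fin n → F | MvPolynomial.eval v p = 0} =
         {v : Fin n → F | MvPolynomial.eval v g = 0}) :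
    ∃ d : MvPolynomial (Fin n) F, d ∣ p ∧ d ∣ g ∧
      {v : Fin n → F | MvPolynomial.eval v d = 0} =
        {v : Fin n → F | MvPolynomial.eval v p = 0} := by
  have hv : ∀ v, MvPolynomial.eval v p = 0 ↔ MvPolynomial.eval v g = 0 :=
    fun v => Set.ext_iff.mp h v
  by_cases hp : p = 0
  · subst hp
    have hg : g = 0 := by
      have : Infinite F := IsAlgClosed.instInfinite
      apply MvPolynomial.funext
      intro v
      rw [map_zero]
      exact (hv v).mp (map_zero _)
    exact ⟨0, dvd_refl _, hg ▸ dvd_refl _, rfl⟩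
  let _ : StrongNormalizationMonoid (MvPolynomial (Fin n) F) :=
    UniqueFactorizationMonoid.strongNormalizationMonoid
  have hrad : g ∈ (Ideal.span {p}).radical := by
    rw [← MvPolynomial.vanishingIdeal_zeroLocus_eq_radical (K := F),
      MvPolynomial.mem_vanishingIdeal_iff]
    intro v hvz
    have h1 := MvPolynomial.mem_zeroLocus_iff.mp hvz p (Ideal.mem_span_singleton_self p)
    rw [MvPolynomial.aeval_eq_eval] at h1 ⊢
    exact (hv v).mp h1
  obtain ⟨m, hm⟩ := hrad
  rw [Ideal.mem_span_singleton] at hm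
  refine ⟨UniqueFactorizationMonoid.radical p, UniqueFactorizationMonoid.radical_dvd_self,
    (UniqueFactorizationMonoid.exists_dvd_pow_iff_radical_dvd hp).mp ⟨m, hm⟩, ?_⟩
  ext v
  simp only [Set.mem_ofPred_eq]
  constructor
  · intro h0
    obtain ⟨c, hc⟩ : UniqueFactorizationMonoid.radical p ∣ p :=
      UniqueFactorizationMonoid.radical_dvd_self
    rw [hc, map_mul, h0, zero_mul]
  · intro h0
    obtain ⟨k, c, hc⟩ := UniqueFactorizationMonoid.exists_dvd_radical_self_pow hp
    have h2 := congrArg (MvPolynomial.eval v) hc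
    rw [map_mul, map_pow, h0, zero_mul] at h2
    exact eq_zero_of_pow_eq_zero h2
end

section
/- Let p ∈ ℝ[x,y]. If deg_x p is odd or deg_y p is odd, then the zero set Z(p) = {(a,b) ∈ ℝ² : p(a,b) = 0} is uncountable. -/
theorem odd_root_aux (f : Polynomial ℝ) (hf : Odd f.natDegree) : ∃ x, f.eval x = 0 := by
  have key : ∀ g : Polynomial ℝ, Odd g.natDegree → 0 ≤ g.leadingCoeff → ∃ x, g.eval x = 0 := by
    intro g hg hl
    have hpos : 0 < g.natDegree := hg.pos
    have h1 := g.tendsto_atTop_of_leadingCoeff_nonneg (Polynomial.natDegree_pos_iff_degree_pos.1 hpos) hl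
    have hd : (g.comp (-Polynomial.X)).natDegree = g.natDegree := by
      simp [Polynomial.natDegree_comp]
    have h2 := (g.comp (-Polynomial.X)).tendsto_atBot_of_leadingCoeff_nonpos
      (Polynomial.natDegree_pos_iff_degree_pos.1 (by rw [hd]; exact hpos))
      (by
        rw [Polynomial.leadingCoeff_comp (by simp)]
        simp [hg.neg_one_pow, hl])
    obtain ⟨a, ha⟩ := (h1.eventually (Filter.eventually_ge_atTop 0)).exists
    obtain ⟨b, hb⟩ := (h2.eventually (Filter.eventually_le_atBot 0)).exists
    simp only [Polynomial.eval_comp, Polynomial.eval_neg, Polynomial.eval_X] at hb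
    exact mem_range_of_exists_le_of_exists_ge g.continuous ⟨_, hb⟩ ⟨_, ha⟩
  rcases le_total 0 f.leadingCoeff with h | h
  · exact key f hf h
  · obtain ⟨x, hx⟩ := key (-f) (by simpa using hf) (by simpa using h)
    exact ⟨x, by simpa using hx⟩

theorem case_zero_aux (p : MvPolynomial (Fin 2) ℝ) (h : Odd (p.degreeOf 0)) :
    ¬ ({ab : ℝ × ℝ | MvPolynomial.eval ![ab.1, ab.2] p = 0}).Countable := by
  intro hc
  set F := MvPolynomial.finSuccEquiv ℝ 1 p with hF
  have hFd : Odd F.natDegree := by rw [hF, MvPolynomial.natDegree_finSuccEquiv]; exact h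
  have hF0 : F.leadingCoeff ≠ 0 := by
    intro h0
    rw [Polynomial.leadingCoeff_eq_zero] at h0
    simp [h0] at hFd
  set q : Polynomial ℝ := MvPolynomial.aeval (fun _ : Fin 1 => Polynomial.X) F.leadingCoeff with hq
  have hqe : ∀ b : ℝ, q.eval b = MvPolynomial.eval (fun _ => b) F.leadingCoeff := by
    intro b
    rw [hq, ← Polynomial.coe_evalRingHom, MvPolynomial.aeval_def, MvPolynomial.hom_eval₂]
    simp only [Polynomial.coe_evalRingHom, Polynomial.eval_X, MvPolynomial.eval]
    congr 1
    ext; simp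
  have hq0 : q ≠ 0 := by
    intro h0
    apply hF0
    apply MvPolynomial.funext
    intro x
    have : x = fun _ => x 0 := by ext i; fin_cases i; rfl
    rw [this, ← hqe, h0]; simp
  have hfin : {b : ℝ | q.eval b = 0}.Finite := by
    refine (q.roots.toFinset.finite_toSet).subset fun b hb => ?_
    simpa [hq0] using hb
  have : (Set.univ : Set ℝ).Countable := by
    refine ((hc.image Prod.snd).union hfin.countable).mono fun b _ => ?_
    by_cases hb : q.eval b = 0
    · exact Or.inr hb
    · left
      obtain ⟨a, ha⟩ := odd_root_aux (F.map (MvPolynomial.eval (fun _ => b))) (by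
        rw [Polynomial.natDegree_map_of_leadingCoeff_ne_zero _ (by rwa [← hqe])]
        exact hFd)
      refine ⟨(a, b), ?_, rfl⟩
      have := MvPolynomial.eval_eq_eval_mv_eval' (fun _ : Fin 1 => b) a p
      rw [← hF, ha] at this
      rw [Set.mem_ofPred_eq, ← this]
      congr 2
      ext i; fin_cases i <;> rfl
  exact Cardinal.not_countable_real this

theorem stmt_1 (p : MvPolynomial (Fin 2) ℝ)
    (h : Odd (p.degreeOf 0) ∨ Odd (p.degreeOf 1)) :
    ¬ ({ab : ℝ × ℝ | MvPolynomial.eval ![ab.1, ab.2] p = 0}).Countable := by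
  rcases h with h | h
  · exact case_zero_aux p h
  · intro hc
    have hs : Function.Injective (Equiv.swap (0 : Fin 2) 1) := (Equiv.swap (0 : Fin 2) 1).injective
    apply case_zero_aux (MvPolynomial.rename (Equiv.swap (0 : Fin 2) 1) p)
    · have := MvPolynomial.degreeOf_rename_of_injective (p := p) hs 1
      rw [Equiv.swap_apply_right] at this
      rwa [this]
    · refine (hc.image Prod.swap).mono ?_
      intro ab hab
      refine ⟨ab.swap, ?_, by simp⟩
      rw [Set.mem_ofPred_eq, MvPolynomial.eval_rename] at hab
      rw [Set.mem_ofPred_eq, ← hab]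
      congr 2
      ext i; fin_cases i <;> simp
end

section
/- Let p ∈ ℝ[x,y]. If the zero set Z(p) = {(a,b) ∈ ℝ² : p(a,b) = 0} is finite, then deg_x p and deg_y p are both even. -/
open Polynomial in
theorem odd_root_aux_s2 (P : ℝ[X]) (hP : Odd P.natDegree) (hl : 0 ≤ P.leadingCoeff) :
    ∃ x, P.eval x = 0 := by
  have hpos : 0 < P.natDegree := hP.pos
  have hd : 0 < P.degree := natDegree_pos_iff_degree_pos.mp hpos
  have h1 := P.tendsto_atTop_of_leadingCoeff_nonneg hd hl
  have hn : (P.comp (-X)).natDegree = P.natDegree := by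
    rw [natDegree_comp]; simp
  have hlc : (P.comp (-X)).leadingCoeff = - P.leadingCoeff := by
    rw [leadingCoeff_comp (by simp)]; simp [hP.neg_one_pow]
  have h2 := (P.comp (-X)).tendsto_atBot_of_leadingCoeff_nonpos
    (natDegree_pos_iff_degree_pos.mp (by omega)) (by linarith)
  obtain ⟨a, ha⟩ := (h1.eventually_ge_atTop 0).exists
  obtain ⟨b, hb⟩ := (h2.eventually_le_atBot 0).exists
  have := mem_range_of_exists_le_of_exists_ge P.continuous ⟨-b, by simpa using hb⟩ ⟨a, ha⟩
  exact this

open Polynomial in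
theorem odd_root (P : ℝ[X]) (hP : Odd P.natDegree) : ∃ x, P.eval x = 0 := by
  rcases le_total 0 P.leadingCoeff with hl | hl
  · exact odd_root_aux_s2 P hP hl
  · obtain ⟨x, hx⟩ := odd_root_aux_s2 (-P) (by simpa using hP) (by simpa using hl)
    exact ⟨x, by simpa using hx⟩

theorem even_degreeOf_zero (p : MvPolynomial (Fin 2) ℝ)
    (h : ({ab : ℝ × ℝ | MvPolynomial.eval ![ab.1, ab.2] p = 0}).Finite) :
    Even (p.degreeOf 0) := by
  by_contra hodd
  rw [Nat.not_even_iff_odd] at hodd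
  rw [← MvPolynomial.natDegree_finSuccEquiv] at hodd
  set q := MvPolynomial.finSuccEquiv ℝ 1 p with hq
  have hT : ((Prod.snd '' {ab : ℝ × ℝ | MvPolynomial.eval ![ab.1, ab.2] p = 0})ᶜ).Infinite :=
    (h.image Prod.snd).infinite_compl
  have hc : q.leadingCoeff = 0 := by
    refine MvPolynomial.funext_set (fun _ => _) (fun _ => hT) ?_
    intro s hs
    rw [map_zero]
    by_contra hne
    have hs0 := hs 0 (Set.mem_univ _)
    apply hs0
    obtain ⟨x, hx⟩ := odd_root (q.map (MvPolynomial.eval s))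
      (by rwa [Polynomial.natDegree_map_of_leadingCoeff_ne_zero _ hne])
    rw [hq, ← MvPolynomial.eval_eq_eval_mv_eval'] at hx
    refine ⟨(x, s 0), ?_, rfl⟩
    have e : (![x, s 0] : Fin 2 → ℝ) = Fin.cons x s := by
      ext i; fin_cases i <;> rfl
    simpa only [Set.mem_setOf_eq, e] using hx
  rw [Polynomial.leadingCoeff_eq_zero] at hc
  rw [hc] at hodd
  simp at hodd

theorem stmt_2 (p : MvPolynomial (Fin 2) ℝ)
    (h : ({ab : ℝ × ℝ | MvPolynomial.eval ![ab.1, ab.2] p = 0}).Finite) :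
    Even (p.degreeOf 0) ∧ Even (p.degreeOf 1) := by
  refine ⟨even_degreeOf_zero p h, ?_⟩
  have hi : Function.Injective (Equiv.swap (0 : Fin 2) 1) := Equiv.injective _
  have key := even_degreeOf_zero (MvPolynomial.rename (Equiv.swap (0 : Fin 2) 1) p) ?_
  · have := MvPolynomial.degreeOf_rename_of_injective (p := p) hi 1
    rw [Equiv.swap_apply_right] at this
    rwa [this] at key
  · refine (h.image Prod.swap).subset ?_
    rintro ⟨a, b⟩ hab
    refine ⟨(b, a), ?_, rfl⟩
    rw [Set.mem_setOf_eq, MvPolynomial.eval_rename] at hab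
    have e : (![a, b] : Fin 2 → ℝ) ∘ (Equiv.swap (0 : Fin 2) 1) = ![b, a] := by
      ext i; fin_cases i <;> simp
    rw [e] at hab
    exact hab
end

section
/- Let p, g ∈ ℝ[x,y] be two polynomials with the same zero set Z = Z(p) = Z(g), and let n = deg_x p. If the set of real numbers y₀ such that the horizontal line y = y₀ intersects Z in at least n distinct points (i.e., the set {x ∈ ℝ : (x, y₀) ∈ Z} has at least n elements) is infinite, then there exists d ∈ ℝ[x,y] such that d divides p, d divides g, and Z(d) = Z. -/
theorem pseudo_div {A : Type*} [CommRing A] [IsDomain A] (P : Polynomial A) (hP : P ≠ 0) :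
    ∀ (m : ℕ) (G : Polynomial A), G.degree < (m : WithBot ℕ) →
      ∃ (c : A) (q r : Polynomial A), c ≠ 0 ∧
        Polynomial.C c * G = q * P + r ∧ r.degree < P.degree := by
  intro m
  induction m with
  | zero =>
    intro G hG
    have hG0 : G = 0 := by
      have := Polynomial.degree_lt_iff_coeff_zero G 0
      ext i
      simpa using this.1 hG i (Nat.zero_le _)
    exact ⟨1, 0, 0, one_ne_zero, by simp [hG0],
      by simpa [bot_lt_iff_ne_bot, Polynomial.degree_eq_bot] using hP⟩
  | succ m ih =>
    intro G hG
    by_cases hlt : G.degree < P.degree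
    · exact ⟨1, 0, G, one_ne_zero, by simp, hlt⟩
    · push Not at hlt
      have hG0 : G ≠ 0 := by
        rintro rfl
        simp [hP] at hlt
      have hnd : P.natDegree ≤ G.natDegree := Polynomial.natDegree_le_natDegree hlt
      have hlP : P.leadingCoeff ≠ 0 := by simpa using hP
      have hlG : G.leadingCoeff ≠ 0 := by simpa using hG0
      set T : Polynomial A :=
        Polynomial.C G.leadingCoeff * Polynomial.X ^ (G.natDegree - P.natDegree) with hT
      have hd1 : (Polynomial.C P.leadingCoeff * G).degree = G.degree := by
        rw [Polynomial.degree_mul, Polynomial.degree_C hlP, zero_add]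
      have hd2 : (T * P).degree = G.degree := by
        rw [hT, Polynomial.degree_mul, Polynomial.degree_C_mul_X_pow _ hlG,
          Polynomial.degree_eq_natDegree hP, Polynomial.degree_eq_natDegree hG0]
        norm_cast
        omega
      have hd := Polynomial.degree_sub_lt_left (hd1.trans hd2.symm)
        (mul_ne_zero (by simpa using hP) hG0)
        (by
          rw [hT, Polynomial.leadingCoeff_mul, Polynomial.leadingCoeff_mul,
            Polynomial.leadingCoeff_C, Polynomial.leadingCoeff_C_mul_X_pow, mul_comm])
      rw [hd1] at hd
      have hd' : (Polynomial.C P.leadingCoeff * G - T * P).degree < (m : WithBot ℕ) := by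
        refine hd.trans_le ?_
        rw [Polynomial.degree_eq_natDegree hG0] at hG ⊢
        norm_cast at hG ⊢
        omega
      obtain ⟨c, q, r, hc, he, hr⟩ := ih _ hd'
      refine ⟨c * P.leadingCoeff, q + Polynomial.C c * T, r, mul_ne_zero hc hlP, ?_, hr⟩
      rw [Polynomial.C_mul]
      linear_combination he

theorem eval_two (f : MvPolynomial (Fin 2) ℝ) (a b : ℝ) :
    MvPolynomial.eval ![a, b] f = Polynomial.eval a
      (Polynomial.map (MvPolynomial.eval (fun _ : Fin 1 => b)) (MvPolynomial.finSuccEquiv ℝ 1 f)) := by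
  rw [← MvPolynomial.eval_eq_eval_mv_eval']
  congr 2
  funext i
  fin_cases i <;> rfl

theorem line_dvd (f : MvPolynomial (Fin 2) ℝ) (b : ℝ)
    (h : ∀ a, MvPolynomial.eval ![a, b] f = 0) :
    (MvPolynomial.X 1 - MvPolynomial.C b) ∣ f := by
  have key : ∀ f : MvPolynomial (Fin 2) ℝ, (MvPolynomial.X 1 - MvPolynomial.C b) ∣
      f - MvPolynomial.aeval ![(MvPolynomial.X 0 : MvPolynomial (Fin 2) ℝ), MvPolynomial.C b] f := by
    intro f
    induction f using MvPolynomial.induction_on with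
    | C a => simp [MvPolynomial.algebraMap_eq]
    | add p q hp hq =>
      rw [map_add, add_sub_add_comm]
      exact dvd_add hp hq
    | mul_X p i hp =>
      rw [map_mul, MvPolynomial.aeval_X]
      fin_cases i
      · simpa [← sub_mul] using Dvd.dvd.mul_right hp _
      · obtain ⟨k, hk⟩ := hp
        refine ⟨k * MvPolynomial.C b + p, ?_⟩
        simp only [Fin.mk_one, Matrix.cons_val_one, Matrix.cons_val_fin_one]
        linear_combination (MvPolynomial.C b) * hk
  have h0 : MvPolynomial.aeval
      ![(MvPolynomial.X 0 : MvPolynomial (Fin 2) ℝ), MvPolynomial.C b] f = 0 := by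
    apply MvPolynomial.funext
    intro x
    rw [map_zero, ← h (x 0), MvPolynomial.aeval_def, ← MvPolynomial.coe_eval₂Hom]
    rw [← RingHom.comp_apply]
    congr 1
    apply MvPolynomial.ringHom_ext
    · intro r
      simp [MvPolynomial.algebraMap_eq]
    · intro i
      fin_cases i <;> simp
  have := key f
  rwa [h0, sub_zero] at this

theorem stmt_3 (p g : MvPolynomial (Fin 2) ℝ)
    (Z : Set (ℝ × ℝ))
    (hZp : Z = {ab : ℝ × ℝ | MvPolynomial.eval ![ab.1, ab.2] p = 0})
    (hZg : Z = {ab : ℝ × ℝ | MvPolynomial.eval ![ab.1, ab.2] g = 0})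
    (hlines : {y₀ : ℝ | (p.degreeOf 0 : ℕ∞) ≤ {x : ℝ | (x, y₀) ∈ Z}.encard}.Infinite) :
    ∃ d : MvPolynomial (Fin 2) ℝ, d ∣ p ∧ d ∣ g ∧
      {ab : ℝ × ℝ | MvPolynomial.eval ![ab.1, ab.2] d = 0} = Z := by
  have hp : ∀ a b, (a, b) ∈ Z → MvPolynomial.eval ![a, b] p = 0 := by
    intro a b h; rw [hZp] at h; exact h
  have hg : ∀ a b, (a, b) ∈ Z → MvPolynomial.eval ![a, b] g = 0 := by
    intro a b h; rw [hZg] at h; exact h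
  have hp' : ∀ a b, MvPolynomial.eval ![a, b] p = 0 → (a, b) ∈ Z := by
    intro a b h; rw [hZp]; exact h
  by_cases hp0 : p = 0
  · have hg0 : g = 0 := by
      apply MvPolynomial.funext
      intro x
      have hx : x = ![x 0, x 1] := by
        funext i; fin_cases i <;> rfl
      rw [hx, map_zero]
      exact hg _ _ (hp' _ _ (by simp [hp0]))
    exact ⟨0, by simp [hp0], by simp [hg0], by rw [hZp, hp0]⟩
  have hP0 : MvPolynomial.finSuccEquiv ℝ 1 p ≠ 0 := by simpa using hp0
  obtain ⟨c, q, r, hc, he, hr⟩ := pseudo_div _ hP0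
    ((MvPolynomial.finSuccEquiv ℝ 1 g).natDegree + 1) (MvPolynomial.finSuccEquiv ℝ 1 g)
    (lt_of_le_of_lt Polynomial.degree_le_natDegree (by norm_cast; omega))
  -- the remainder vanishes
  have hr0 : r = 0 := by
    ext1 i
    rw [Polynomial.coeff_zero]
    refine MvPolynomial.funext_set (fun _ => _) (fun _ => hlines) ?_
    intro y hy
    have hyl := hy 0 (Set.mem_univ _)
    have hyc : y = fun _ => y 0 := by
      funext i; fin_cases i; rfl
    have hz : Polynomial.map (MvPolynomial.eval y) r = 0 := by
      by_contra hne
      have hsub : {x : ℝ | (x, y 0) ∈ Z} ⊆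
          ((Polynomial.map (MvPolynomial.eval y) r).roots.toFinset : Set ℝ) := by
        intro x hx
        have h1 := hp _ _ hx
        have h2 := hg _ _ hx
        rw [eval_two, ← hyc] at h1 h2
        have h3 := congrArg (fun t => Polynomial.eval x
          (Polynomial.map (MvPolynomial.eval y) t)) he
        simp only [Polynomial.map_mul, Polynomial.map_add, Polynomial.eval_mul,
          Polynomial.eval_add, h1, h2, mul_zero, zero_add] at h3
        simp [hne, ← h3]
      have h4 := le_trans (show (p.degreeOf 0 : ℕ∞) ≤ {x : ℝ | (x, y 0) ∈ Z}.encard from hyl)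
        (Set.encard_le_encard hsub)
      rw [Set.encard_coe_eq_coe_finsetCard] at h4
      have h5 : p.degreeOf 0 ≤ (Polynomial.map (MvPolynomial.eval y) r).roots.toFinset.card := by
        exact_mod_cast h4
      have h6 := h5.trans ((Multiset.toFinset_card_le _).trans (Polynomial.card_roots' _))
      have h7 : (Polynomial.map (MvPolynomial.eval y) r).degree <
          (MvPolynomial.finSuccEquiv ℝ 1 p).degree :=
        lt_of_le_of_lt Polynomial.degree_map_le hr
      have h8 := Polynomial.natDegree_lt_natDegree hne h7
      rw [MvPolynomial.natDegree_finSuccEquiv] at h8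
      omega
    have := congrArg (fun t => Polynomial.coeff t i) hz
    simpa using this
  let _ : GCDMonoid (MvPolynomial (Fin 2) ℝ) := UniqueFactorizationMonoid.toGCDMonoid _
  obtain ⟨p', g', hpp, hgg, hu⟩ := extract_gcd p g
  have hd0 : gcd p g ≠ 0 := by
    intro h; rw [h, zero_mul] at hpp; exact hp0 hpp
  refine ⟨gcd p g, gcd_dvd_left _ _, gcd_dvd_right _ _, ?_⟩
  -- `p'` does not involve `x`
  have hdvd : p' ∣ (MvPolynomial.finSuccEquiv ℝ 1).symm (Polynomial.C c) := by
    have h1 : (MvPolynomial.finSuccEquiv ℝ 1).symm (Polynomial.C c) * g =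
        (MvPolynomial.finSuccEquiv ℝ 1).symm q * p := by
      apply (MvPolynomial.finSuccEquiv ℝ 1).injective
      simp only [map_mul, AlgEquiv.apply_symm_apply, he, hr0, add_zero]
    have h2 : p' ∣ (MvPolynomial.finSuccEquiv ℝ 1).symm (Polynomial.C c) * g' := by
      refine ⟨(MvPolynomial.finSuccEquiv ℝ 1).symm q, ?_⟩
      apply mul_left_cancel₀ hd0
      calc _ = (MvPolynomial.finSuccEquiv ℝ 1).symm (Polynomial.C c) * (gcd p g * g') := by ring
        _ = (MvPolynomial.finSuccEquiv ℝ 1).symm q * (gcd p g * p') := by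
          rw [← hgg, h1, ← hpp]
        _ = _ := by ring
    exact (gcd_isUnit_iff_isRelPrime.1 hu).dvd_of_dvd_mul_right h2
  have hdeg : ∃ e, MvPolynomial.finSuccEquiv ℝ 1 p' = Polynomial.C e := by
    obtain ⟨s, hs⟩ := hdvd
    have hs' := congrArg (MvPolynomial.finSuccEquiv ℝ 1) hs
    rw [AlgEquiv.apply_symm_apply, map_mul] at hs'
    have hne : MvPolynomial.finSuccEquiv ℝ 1 p' * MvPolynomial.finSuccEquiv ℝ 1 s ≠ 0 := by
      rw [← hs']; simpa using hc
    have h1 := congrArg Polynomial.natDegree hs'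
    rw [Polynomial.natDegree_mul (left_ne_zero_of_mul hne) (right_ne_zero_of_mul hne),
      Polynomial.natDegree_C] at h1
    exact ⟨_, Polynomial.eq_C_of_natDegree_eq_zero (by omega)⟩
  obtain ⟨e, hee⟩ := hdeg
  ext ⟨a, b⟩
  simp only [Set.mem_ofPred_eq]
  constructor
  · intro h
    apply hp'
    rw [hpp, map_mul, h, zero_mul]
  · intro h
    have h1 := hp _ _ h
    rw [hpp, map_mul] at h1
    rcases mul_eq_zero.1 h1 with h1 | h1
    · exact h1
    · have hline : ∀ x, MvPolynomial.eval ![x, b] p = 0 := by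
        intro x
        rw [eval_two, hee] at h1
        rw [hpp, map_mul, eval_two p', hee]
        simp only [Polynomial.map_C, Polynomial.eval_C] at h1 ⊢
        rw [h1, mul_zero]
      obtain ⟨k, hk⟩ := dvd_gcd (line_dvd p b hline)
        (line_dvd g b fun x => hg _ _ (hp' _ _ (hline x)))
      rw [hk]
      simp
end

section
/- Let p, g ∈ ℝ[x,y] be two polynomials with the same zero set Z = Z(p) = Z(g), and let n = deg_y p. If the set of real numbers x₀ such that the vertical line x = x₀ intersects Z in at least n distinct points (i.e., the set {y ∈ ℝ : (x₀, y) ∈ Z} has at least n elements) is infinite, then there exists d ∈ ℝ[x,y] such that d divides p, d divides g, and Z(d) = Z. -/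
open Polynomial in
lemma aux_gcd (P G : Polynomial (Polynomial ℝ)) (hP : P ≠ 0) :
    ∃ (D A B : Polynomial (Polynomial ℝ)) (r : Polynomial ℝ), D.IsPrimitive ∧ r ≠ 0 ∧
      D ∣ P ∧ D ∣ G ∧ C r * D = A * P + B * G := by
  classical
  letI : NormalizedGCDMonoid ℝ[X] := Classical.choice inferInstance
  let K := FractionRing ℝ[X]
  let φ := algebraMap ℝ[X] K
  have hφ : Function.Injective φ := IsFractionRing.injective ℝ[X] K
  let D' : K[X] := EuclideanDomain.gcd (P.map φ) (G.map φ)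
  have hab : D' = P.map φ * EuclideanDomain.gcdA (P.map φ) (G.map φ) +
    G.map φ * EuclideanDomain.gcdB (P.map φ) (G.map φ) := EuclideanDomain.gcd_eq_gcd_ab _ _
  have hDP : D' ∣ P.map φ := EuclideanDomain.gcd_dvd_left _ _
  have hDG : D' ∣ G.map φ := EuclideanDomain.gcd_dvd_right _ _
  have hD0 : D' ≠ 0 := by
    intro h
    rw [h, zero_dvd_iff, Polynomial.map_eq_zero_iff hφ] at hDP
    exact hP hDP
  clear_value D'
  generalize EuclideanDomain.gcdA (P.map φ) (G.map φ) = a at hab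
  generalize EuclideanDomain.gcdB (P.map φ) (G.map φ) = b at hab
  obtain ⟨u, hu, hNu⟩ := IsLocalization.integerNormalization_spec (nonZeroDivisors ℝ[X]) D'
  obtain ⟨v, hv, hNv⟩ := IsLocalization.integerNormalization_spec (nonZeroDivisors ℝ[X]) a
  obtain ⟨w, hw, hNw⟩ := IsLocalization.integerNormalization_spec (nonZeroDivisors ℝ[X]) b
  have hN0 : IsLocalization.integerNormalization (nonZeroDivisors ℝ[X]) D' ≠ 0 :=
    mt IsFractionRing.integerNormalization_eq_zero_iff.mp hD0
  generalize IsLocalization.integerNormalization (nonZeroDivisors ℝ[X]) D' = N at hNu hN0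
  generalize IsLocalization.integerNormalization (nonZeroDivisors ℝ[X]) a = a' at hNv
  generalize IsLocalization.integerNormalization (nonZeroDivisors ℝ[X]) b = b' at hNw
  have hu0 := nonZeroDivisors.ne_zero hu
  have hv0 := nonZeroDivisors.ne_zero hv
  have hw0 := nonZeroDivisors.ne_zero hw
  have hsm : ∀ (t : ℝ[X]) (q : K[X]), t • q = C (φ t) * q := by
    intro t q
    rw [← smul_eq_C_mul, algebraMap_smul]
  rw [hsm] at hNu hNv hNw
  have hunit : IsUnit (C (φ u)) := by
    rw [isUnit_C, isUnit_iff_ne_zero]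
    exact (map_ne_zero_iff φ hφ).mpr hu0
  have hdiv : N.primPart.map φ ∣ D' := by
    have h1 : N.primPart.map φ ∣ N.map φ := Polynomial.map_dvd _ N.primPart_dvd
    change N.map φ = _ at hNu
    rw [hNu] at h1
    exact (hunit.dvd_mul_left).mp h1
  refine ⟨N.primPart, C (u * w) * a', C (u * v) * b', v * w * N.content, N.isPrimitive_primPart,
    mul_ne_zero (mul_ne_zero hv0 hw0) (mt content_eq_zero_iff.mp hN0),
    N.isPrimitive_primPart.dvd_of_fraction_map_dvd_fraction_map (K := K) (hdiv.trans hDP),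
    N.isPrimitive_primPart.dvd_of_fraction_map_dvd_fraction_map (K := K) (hdiv.trans hDG), ?_⟩
  rw [C_mul, mul_assoc, ← N.eq_C_content_mul_primPart]
  apply Polynomial.map_injective φ hφ
  change N.map φ = _ at hNu
  change a'.map φ = _ at hNv
  change b'.map φ = _ at hNw
  simp only [Polynomial.map_mul, Polynomial.map_add, Polynomial.map_C, hNu, hNv, hNw, C_mul, map_mul]
  rw [hab]
  ring

open Polynomial in
lemma aux_dvd (q : Polynomial (Polynomial ℝ)) (a : ℝ) (h : q.map (evalRingHom a) = 0) :
    C (X - C a) ∣ q := by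
  rw [C_dvd_iff_dvd_coeff]
  intro i
  rw [dvd_iff_isRoot]
  have := congrArg (fun p => p.coeff i) h
  simpa using this

open Polynomial in
lemma aux_eval (q : Polynomial (Polynomial ℝ)) (a b : ℝ) :
    q.evalEval a b = (q.map (evalRingHom a)).eval b := by
  rw [eval_map, eval₂_evalRingHom]

set_option maxHeartbeats 2000000 in
open Polynomial in
lemma aux_core (P G : Polynomial (Polynomial ℝ)) (n : ℕ) (hn : P.natDegree ≤ n)
    (hZ : ∀ a b, P.evalEval a b = 0 ↔ G.evalEval a b = 0)
    (hinf : {a : ℝ | (n : ℕ∞) ≤ {b : ℝ | P.evalEval a b = 0}.encard}.Infinite) :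
    ∃ d, d ∣ P ∧ d ∣ G ∧ ∀ a b, d.evalEval a b = 0 ↔ P.evalEval a b = 0 := by
  classical
  by_cases hP : P = 0
  · exact ⟨G, hP ▸ dvd_zero _, dvd_rfl, fun a b => (hZ a b).symm⟩
  obtain ⟨D, A, B, r, hD, hr, ⟨q, hq⟩, ⟨g, hg⟩, hid⟩ := aux_gcd P G hP
  have hDa : ∀ a, D.map (evalRingHom a) ≠ 0 := by
    intro a h
    exact not_isUnit_X_sub_C a (hD _ (aux_dvd D a h))
  have hdeg : n ≤ D.natDegree := by
    obtain ⟨a, ha, har⟩ := hinf.exists_notMem_finset r.roots.toFinset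
    have har : r.eval a ≠ 0 := by simpa [hr] using har
    have hsub : {b : ℝ | P.evalEval a b = 0} ⊆ ↑(D.map (evalRingHom a)).roots.toFinset := by
      intro b hb
      have hb : P.evalEval a b = 0 := hb
      have h1 := congrArg (evalEval a b) hid
      rw [evalEval_mul, evalEval_add, evalEval_mul, evalEval_mul, hb, (hZ a b).1 hb,
        evalEval_C] at h1
      have h2 : D.evalEval a b = 0 := by simpa [har] using h1
      rw [aux_eval] at h2
      simpa [hDa a] using h2
    have h3 : (n : ℕ∞) ≤ _ := le_trans ha (Set.encard_le_encard hsub)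
    rw [Set.encard_coe_eq_coe_finsetCard, Nat.cast_le] at h3
    exact h3.trans ((Multiset.toFinset_card_le _).trans ((card_roots' _).trans natDegree_map_le))
  have hD0 : D ≠ 0 := hD.ne_zero
  have hq0 : q ≠ 0 := by rintro rfl; simp at hq; exact hP hq
  have hqd : q.natDegree = 0 := by
    have := natDegree_mul hD0 hq0
    rw [← hq] at this
    omega
  obtain ⟨c, rfl⟩ : ∃ c, q = C c := ⟨_, eq_C_of_natDegree_eq_zero hqd⟩
  have hc0 : c ≠ 0 := by rintro rfl; simp at hq0
  let s : ℝ[X] := ∏ a ∈ c.roots.toFinset, (X - C a)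
  have hcop : Pairwise fun i j : ℝ => IsCoprime (X - C i : ℝ[X]) (X - C j) :=
    pairwise_coprime_X_sub_C Function.injective_id
  have hsc : C s ∣ (C c : ℝ[X][X]) := by
    refine _root_.map_dvd C (Finset.prod_dvd_of_coprime (hcop.set_pairwise _) fun a ha => ?_)
    rw [dvd_iff_isRoot]
    simpa [hc0] using ha
  have hsg : C s ∣ g := by
    have : C s = ∏ a ∈ c.roots.toFinset, (C (X - C a) : ℝ[X][X]) := map_prod C _ _
    rw [this]
    refine Finset.prod_dvd_of_coprime ?_ fun a ha => ?_
    · intro i _ j _ hij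
      exact (hcop hij).map C
    · have hca : c.eval a = 0 := by simpa [hc0] using ha
      apply aux_dvd
      have h0 : (D.map (evalRingHom a)) * (g.map (evalRingHom a)) = 0 := by
        apply Polynomial.funext
        intro b
        rw [← Polynomial.map_mul, ← hg, ← aux_eval, eval_zero]
        rw [← hZ, hq, evalEval_mul, evalEval_C, hca, mul_zero]
      exact (mul_eq_zero.mp h0).resolve_left (hDa a)
  refine ⟨D * C s, hq ▸ mul_dvd_mul_left D hsc, hg ▸ mul_dvd_mul_left D hsg, fun a b => ?_⟩
  rw [hq, evalEval_mul, evalEval_mul, evalEval_C, evalEval_C, mul_eq_zero, mul_eq_zero]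
  have : s.eval a = 0 ↔ c.eval a = 0 := by
    simp only [s, eval_prod, Finset.prod_eq_zero_iff]
    simp [hc0, sub_eq_zero]
  rw [this]

noncomputable def auxE : MvPolynomial (Fin 2) ℝ →ₐ[ℝ] Polynomial (Polynomial ℝ) :=
  MvPolynomial.aeval ![Polynomial.C Polynomial.X, Polynomial.X]

noncomputable def auxF : Polynomial (Polynomial ℝ) →+* MvPolynomial (Fin 2) ℝ :=
  Polynomial.eval₂RingHom (Polynomial.eval₂RingHom MvPolynomial.C (MvPolynomial.X 0))
    (MvPolynomial.X 1)

lemma auxFE (p : MvPolynomial (Fin 2) ℝ) : auxF (auxE p) = p := by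
  have : (auxF.comp (auxE : MvPolynomial (Fin 2) ℝ →+* _)) = RingHom.id _ := by
    apply MvPolynomial.ringHom_ext
    · intro r
      simp [auxF, auxE, MvPolynomial.algebraMap_eq]
    · intro i
      fin_cases i <;> simp [auxF, auxE]
  exact congrArg (fun f => f p) this

lemma auxF_eval (q : Polynomial (Polynomial ℝ)) (a b : ℝ) :
    MvPolynomial.eval ![a, b] (auxF q) = q.evalEval a b := by
  have : ((MvPolynomial.eval ![a, b]).comp auxF) = Polynomial.evalEvalRingHom a b := by
    apply Polynomial.ringHom_ext'
    · apply Polynomial.ringHom_ext'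
      · ext; simp [auxF]
      · simp [auxF]
    · simp [auxF]
  exact congrArg (fun f => f q) this

lemma auxE_deg (p : MvPolynomial (Fin 2) ℝ) : (auxE p).natDegree ≤ p.degreeOf 1 := by
  rw [auxE, MvPolynomial.aeval_def, MvPolynomial.eval₂_eq']
  apply Polynomial.natDegree_sum_le_of_forall_le
  intro m hm
  rw [Fin.prod_univ_two]
  refine le_trans ?_ (MvPolynomial.monomial_le_degreeOf 1 hm)
  simp only [Matrix.cons_val_zero, Matrix.cons_val_one]
  rw [Polynomial.algebraMap_apply, ← Polynomial.C_pow, ← mul_assoc, ← Polynomial.C_mul]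
  exact Polynomial.natDegree_C_mul_X_pow_le _ _

theorem stmt_4 (p g : MvPolynomial (Fin 2) ℝ)
    (Z : Set (ℝ × ℝ))
    (hZp : Z = {ab : ℝ × ℝ | MvPolynomial.eval ![ab.1, ab.2] p = 0})
    (hZg : Z = {ab : ℝ × ℝ | MvPolynomial.eval ![ab.1, ab.2] g = 0})
    (hlines : {x₀ : ℝ | (p.degreeOf 1 : ℕ∞) ≤ {y : ℝ | (x₀, y) ∈ Z}.encard}.Infinite) :
    ∃ d : MvPolynomial (Fin 2) ℝ, d ∣ p ∧ d ∣ g ∧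
      {ab : ℝ × ℝ | MvPolynomial.eval ![ab.1, ab.2] d = 0} = Z := by
  have hp : ∀ a b, (auxE p).evalEval a b = 0 ↔ (a, b) ∈ Z := by
    intro a b
    rw [← auxF_eval, auxFE, hZp]; rfl
  have hg : ∀ a b, (auxE g).evalEval a b = 0 ↔ (a, b) ∈ Z := by
    intro a b
    rw [← auxF_eval, auxFE, hZg]; rfl
  obtain ⟨d, h1, h2, h3⟩ := aux_core (auxE p) (auxE g) _ (auxE_deg p)
    (fun a b => (hp a b).trans (hg a b).symm) (by simpa only [hp] using hlines)
  refine ⟨auxF d, auxFE p ▸ map_dvd auxF h1, auxFE g ▸ map_dvd auxF h2, ?_⟩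
  ext ⟨a, b⟩
  rw [← hp, ← h3, ← auxF_eval]; rfl
end

section
/- Let p, g ∈ ℝ[x,y] be two polynomials with the same zero set Z = Z(p) = Z(g), and let n = deg[p] be the total degree of p. Suppose there exist real numbers α, β, not both zero, such that the set of real numbers c for which the line {(x,y) ∈ ℝ² : αx + βy = c} contains at least n distinct points of Z is infinite. Then there exists d ∈ ℝ[x,y] such that d divides p, d divides g, and Z(d) = Z. -/
/-- `f` has total degree at most `m` as a polynomial in two variables. -/
def WDeg (m : ℕ) (f : Polynomial (Polynomial ℝ)) : Prop :=
  ∀ i j, m < i + j → (f.coeff i).coeff j = 0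

lemma WDeg.mono {m k : ℕ} {f : Polynomial (Polynomial ℝ)} (h : WDeg m f) (hk : m ≤ k) :
    WDeg k f := fun i j hij => h i j (lt_of_le_of_lt hk hij)

lemma WDeg.mul {m k : ℕ} {f g : Polynomial (Polynomial ℝ)} (hf : WDeg m f) (hg : WDeg k g) :
    WDeg (m + k) (f * g) := by
  intro i j hij
  rw [Polynomial.coeff_mul, Polynomial.finsetSum_coeff]
  refine Finset.sum_eq_zero fun x hx => ?_
  rw [Polynomial.coeff_mul]
  refine Finset.sum_eq_zero fun y hy => ?_
  rw [Finset.HasAntidiagonal.mem_antidiagonal] at hx hy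
  by_cases h : m < x.1 + y.1
  · rw [hf _ _ h, zero_mul]
  · rw [hg _ _ (by omega), mul_zero]

lemma WDeg.one : WDeg 0 1 := by
  intro i j hij
  rw [Polynomial.coeff_one]
  split_ifs with h
  · rw [Polynomial.coeff_one, if_neg (by omega)]
  · simp

lemma WDeg.pow {m : ℕ} {f : Polynomial (Polynomial ℝ)} (hf : WDeg m f) (k : ℕ) :
    WDeg (m * k) (f ^ k) := by
  induction k with
  | zero => simpa using WDeg.one
  | succ k ih => rw [pow_succ, Nat.mul_succ]; exact ih.mul hf

lemma WDeg.const (a : ℝ) : WDeg 0 (Polynomial.C (Polynomial.C a)) := by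
  intro i j hij
  rw [Polynomial.coeff_C]
  split_ifs with h
  · rw [Polynomial.coeff_C, if_neg (by omega)]
  · simp

lemma WDeg.lin (a b : ℝ) : WDeg 1 (Polynomial.C (Polynomial.C a * Polynomial.X)
    + Polynomial.C (Polynomial.C b) * Polynomial.X) := by
  intro i j hij
  rw [Polynomial.coeff_add, Polynomial.coeff_C, Polynomial.coeff_C_mul, Polynomial.coeff_X]
  rcases i with _ | _ | i
  · have : 1 ≠ j := by omega
    simp [Polynomial.coeff_X, this]
  · have : j ≠ 0 := by omega
    simp [Polynomial.coeff_C, this]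
  · simp

/-- Substitution of the affine-linear coordinates. -/
noncomputable def subst2 (a b c d : ℝ) :
    MvPolynomial (Fin 2) ℝ →+* Polynomial (Polynomial ℝ) :=
  MvPolynomial.eval₂Hom (Polynomial.C.comp Polynomial.C)
    ![Polynomial.C (Polynomial.C a * Polynomial.X) + Polynomial.C (Polynomial.C b) * Polynomial.X,
      Polynomial.C (Polynomial.C c * Polynomial.X) + Polynomial.C (Polynomial.C d) * Polynomial.X]

lemma subst2_wdeg (a b c d : ℝ) (p : MvPolynomial (Fin 2) ℝ) :
    WDeg p.totalDegree (subst2 a b c d p) := by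
  intro i j hij
  rw [subst2, MvPolynomial.coe_eval₂Hom, MvPolynomial.eval₂_eq', Polynomial.finsetSum_coeff,
    Polynomial.finsetSum_coeff]
  refine Finset.sum_eq_zero fun s hs => ?_
  have h1 := MvPolynomial.le_totalDegree hs
  rw [Finsupp.sum_fintype _ _ (by simp), Fin.sum_univ_two] at h1
  rw [Fin.prod_univ_two]
  refine (WDeg.mul (WDeg.const _) (((WDeg.lin a b).pow _).mul ((WDeg.lin c d).pow _))) i j ?_
  omega

lemma subst2_eval (a b c d x t : ℝ) (p : MvPolynomial (Fin 2) ℝ) :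
    ((subst2 a b c d p).map (Polynomial.evalRingHom x)).eval t
      = MvPolynomial.eval ![a * x + b * t, c * x + d * t] p := by
  have : ((Polynomial.evalRingHom t).comp
      (Polynomial.mapRingHom (Polynomial.evalRingHom x))).comp (subst2 a b c d)
      = MvPolynomial.eval ![a * x + b * t, c * x + d * t] := by
    apply MvPolynomial.ringHom_ext
    · intro r; simp [subst2]
    · intro i; fin_cases i <;> simp [subst2]
  exact congrArg (fun f => f p) this

/-- The inverse substitution. -/
noncomputable def back2 (α β : ℝ) : Polynomial (Polynomial ℝ) →+* MvPolynomial (Fin 2) ℝ :=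
  Polynomial.eval₂RingHom
    (Polynomial.eval₂RingHom MvPolynomial.C
      (MvPolynomial.C α * MvPolynomial.X 0 + MvPolynomial.C β * MvPolynomial.X 1))
    (MvPolynomial.C (-β) * MvPolynomial.X 0 + MvPolynomial.C α * MvPolynomial.X 1)

lemma back2_subst2 (α β N : ℝ) (hN : N = α ^ 2 + β ^ 2) (h0 : N ≠ 0)
    (p : MvPolynomial (Fin 2) ℝ) :
    back2 α β (subst2 (α / N) (-β / N) (β / N) (α / N) p) = p := by
  have : (back2 α β).comp (subst2 (α / N) (-β / N) (β / N) (α / N)) = RingHom.id _ := by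
    apply MvPolynomial.ringHom_ext
    · intro r; simp [subst2, back2]
    · have e1 : α / N * α + -β / N * -β = 1 := by
        rw [show α / N * α + -β / N * -β = (α ^ 2 + β ^ 2) / N by ring, ← hN, div_self h0]
      have e2 : α / N * β + -β / N * α = 0 := by ring
      have e3 : β / N * α + α / N * -β = 0 := by ring
      have e4 : β / N * β + α / N * α = 1 := by field_simp; rw [hN]; ring
      have key : ∀ a b : ℝ, MvPolynomial.C a * (MvPolynomial.C α * MvPolynomial.X 0
            + MvPolynomial.C β * MvPolynomial.X 1)
          + MvPolynomial.C b * (MvPolynomial.C (-β) * MvPolynomial.X 0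
            + MvPolynomial.C α * MvPolynomial.X 1)
          = (MvPolynomial.C (a * α + b * -β) * MvPolynomial.X 0
            + MvPolynomial.C (a * β + b * α) * MvPolynomial.X 1 : MvPolynomial (Fin 2) ℝ) := by
        intro a b
        simp only [MvPolynomial.C_add, MvPolynomial.C_mul]; ring
      have f1 := key (α / N) (-β / N)
      have f2 := key (β / N) (α / N)
      rw [e1, e2] at f1
      rw [e3, e4] at f2
      simp only [MvPolynomial.C_1, MvPolynomial.C_0, zero_mul, one_mul, add_zero, zero_add]
        at f1 f2
      intro i; fin_cases i
      · simpa [subst2, back2] using f1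
      · simpa [subst2, back2] using f2
  exact congrArg (fun f => f p) this

lemma eq_zero_of_infinite {q : Polynomial ℝ} {S : Set ℝ} (hS : S.Infinite)
    (h : ∀ c ∈ S, q.eval c = 0) : q = 0 :=
  Polynomial.eq_zero_of_infinite_isRoot q (hS.mono h)

/-- The bivariate core of the argument. -/
lemma core_dvd (n : ℕ) (F G : Polynomial (Polynomial ℝ)) (hF0 : F ≠ 0) (hF : WDeg n F)
    (S : Set ℝ) (hS : S.Infinite)
    (hT : ∀ c ∈ S, ∃ T : Finset ℝ, T.card = n ∧
      ∀ t ∈ T, (F.map (Polynomial.evalRingHom c)).eval t = 0 ∧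
        (G.map (Polynomial.evalRingHom c)).eval t = 0) : F ∣ G := by
  have hdeg : F.degree ≤ n := by
    rw [Polynomial.degree_le_iff_coeff_zero]
    intro m hm
    ext j
    have hm' : n < m := by exact_mod_cast hm
    simpa using hF m j (by omega)
  obtain ⟨a, ha⟩ : ∃ a, F.coeff n = Polynomial.C a := by
    refine ⟨(F.coeff n).coeff 0, ?_⟩
    ext j
    rw [Polynomial.coeff_C]
    split_ifs with h
    · rw [h]
    · exact hF n j (by omega)
  have ha0 : a ≠ 0 := by
    intro h
    apply hF0
    have hlt : F.degree < n := by
      rw [Polynomial.degree_lt_iff_coeff_zero]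
      intro m hm
      rcases hm.eq_or_lt with rfl | hm
      · rw [ha, h, Polynomial.C_0]
      · exact Polynomial.coeff_eq_zero_of_degree_lt (lt_of_le_of_lt hdeg (by exact_mod_cast hm))
    ext1 k
    rw [Polynomial.coeff_zero]
    refine eq_zero_of_infinite hS fun c hc => ?_
    obtain ⟨T, hTn, hT⟩ := hT c hc
    have := Polynomial.eq_zero_of_degree_lt_of_eval_finset_eq_zero
      (f := F.map (Polynomial.evalRingHom c)) T
      (by rw [hTn]; exact lt_of_le_of_lt Polynomial.degree_map_le hlt)
      (fun t ht => (hT t ht).1)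
    have h2 := congrArg (fun f => Polynomial.coeff f k) this
    simpa using h2
  set M := F * Polynomial.C (Polynomial.C a⁻¹) with hM
  have hMc : M.coeff n = 1 := by
    rw [hM, Polynomial.coeff_mul_C, ha, ← Polynomial.C_mul, mul_inv_cancel₀ ha0, Polynomial.C_1]
  have hMd : M.degree ≤ n := by
    rw [Polynomial.degree_le_iff_coeff_zero] at hdeg ⊢
    intro m hm
    rw [hM, Polynomial.coeff_mul_C, hdeg m hm, zero_mul]
  have hmon : M.Monic := Polynomial.monic_of_degree_le n hMd hMc
  have hR : G %ₘ M = 0 := by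
    ext1 k
    rw [Polynomial.coeff_zero]
    refine eq_zero_of_infinite hS fun c hc => ?_
    obtain ⟨T, hTn, hT⟩ := hT c hc
    have := Polynomial.eq_zero_of_degree_lt_of_eval_finset_eq_zero
      (f := (G %ₘ M).map (Polynomial.evalRingHom c)) T
      (by
        rw [hTn]
        exact lt_of_le_of_lt Polynomial.degree_map_le
          (lt_of_lt_of_le (Polynomial.degree_modByMonic_lt G hmon) hMd))
      (fun t ht => by
        have h3 : G %ₘ M = G - M * (G /ₘ M) := Polynomial.modByMonic_eq_sub_mul_div G M
        rw [h3, hM, Polynomial.map_sub, Polynomial.map_mul, Polynomial.map_mul,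
          Polynomial.eval_sub, Polynomial.eval_mul, Polynomial.eval_mul, (hT t ht).1,
          (hT t ht).2]
        simp)
    have h2 := congrArg (fun f => Polynomial.coeff f k) this
    simpa using h2
  exact (Dvd.intro _ rfl : F ∣ M).trans ((Polynomial.modByMonic_eq_zero_iff_dvd hmon).1 hR)

theorem stmt_5 (p g : MvPolynomial (Fin 2) ℝ)
    (Z : Set (ℝ × ℝ))
    (hZp : Z = {ab : ℝ × ℝ | MvPolynomial.eval ![ab.1, ab.2] p = 0})
    (hZg : Z = {ab : ℝ × ℝ | MvPolynomial.eval ![ab.1, ab.2] g = 0})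
    (α β : ℝ) (hαβ : (α, β) ≠ (0, 0))
    (hlines : {c : ℝ | (p.totalDegree : ℕ∞) ≤
        {ab : ℝ × ℝ | ab ∈ Z ∧ α * ab.1 + β * ab.2 = c}.encard}.Infinite) :
    ∃ d : MvPolynomial (Fin 2) ℝ, d ∣ p ∧ d ∣ g ∧
      {ab : ℝ × ℝ | MvPolynomial.eval ![ab.1, ab.2] d = 0} = Z := by
  refine ⟨p, dvd_rfl, ?_, hZp.symm⟩
  by_cases hp : p = 0
  · have : g = 0 := by
      apply MvPolynomial.funext
      intro x
      have h1 : (x 0, x 1) ∈ Z := by rw [hZp]; simp [hp]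
      rw [hZg] at h1
      have h2 : ![x 0, x 1] = x := by ext i; fin_cases i <;> rfl
      simpa [h2] using h1
    rw [this]; exact dvd_zero _
  obtain ⟨N, hN⟩ : ∃ N, N = α ^ 2 + β ^ 2 := ⟨_, rfl⟩
  have hN0 : N ≠ 0 := by
    intro h
    apply hαβ
    have h1 : α = 0 := by nlinarith [sq_nonneg α, sq_nonneg β]
    have h2 : β = 0 := by nlinarith [sq_nonneg α, sq_nonneg β]
    rw [h1, h2]
  have hb := back2_subst2 α β N hN hN0
  have key : subst2 (α / N) (-β / N) (β / N) (α / N) p ∣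
      subst2 (α / N) (-β / N) (β / N) (α / N) g := by
    refine core_dvd p.totalDegree _ _ ?_ (subst2_wdeg _ _ _ _ p) _ hlines ?_
    · intro h
      apply hp
      rw [← hb p, h, map_zero]
    · intro c hc
      obtain ⟨U, hU, hUc⟩ := Set.exists_subset_encard_eq hc
      have hfin : U.Finite := Set.finite_of_encard_eq_coe hUc
      have hUcard : hfin.toFinset.card = p.totalDegree := by
        rw [hfin.encard_eq_coe_toFinset_card] at hUc
        exact_mod_cast hUc
      have hpt : ∀ ab ∈ U, α / N * c + -β / N * (-β * ab.1 + α * ab.2) = ab.1 ∧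
          β / N * c + α / N * (-β * ab.1 + α * ab.2) = ab.2 := by
        intro ab hab
        rw [← (hU hab).2]
        constructor <;> (field_simp; rw [hN]; ring)
      refine ⟨hfin.toFinset.image (fun ab => -β * ab.1 + α * ab.2), ?_, ?_⟩
      · rw [Finset.card_image_of_injOn, hUcard]
        intro x hx y hy hxy
        have hx' := hpt x (by simpa using hx)
        have hy' := hpt y (by simpa using hy)
        simp only at hxy
        rw [hxy] at hx'
        exact Prod.ext (hx'.1.symm.trans hy'.1) (hx'.2.symm.trans hy'.2)
      · intro t ht
        obtain ⟨ab, hab, rfl⟩ := Finset.mem_image.1 ht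
        have hab' : ab ∈ U := by simpa using hab
        have hz := (hU hab').1
        rw [subst2_eval, subst2_eval, (hpt ab hab').1, (hpt ab hab').2]
        exact ⟨by rw [hZp] at hz; exact hz, by rw [hZg] at hz; exact hz⟩
  have := map_dvd (back2 α β) key
  rwa [hb, hb] at this
end

section
/- Every line in ℝ² intersects the curve x⁴ + y⁴ = 1 in at most two points: for all real numbers α, β, c with (α, β) ≠ (0, 0), the set {(x,y) ∈ ℝ² : x⁴ + y⁴ = 1 and αx + βy = c} has at most 2 elements. -/
lemma aux_three (α β c x y z u v w : ℝ) (hβ : β ≠ 0)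
    (h1 : x ^ 4 + u ^ 4 = 1) (h2 : y ^ 4 + v ^ 4 = 1) (h3 : z ^ 4 + w ^ 4 = 1)
    (l1 : α * x + β * u = c) (l2 : α * y + β * v = c) (l3 : α * z + β * w = c)
    (hxy : x ≠ y) (hxz : x ≠ z) (hyz : y ≠ z) : False := by
  have e1 : β * ((x + y) * (x ^ 2 + y ^ 2)) = α * ((u + v) * (u ^ 2 + v ^ 2)) := by
    apply mul_left_cancel₀ (sub_ne_zero.2 hxy)
    linear_combination β * (h1 - h2) - (u + v) * (u ^ 2 + v ^ 2) * (l1 - l2)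
  have e2 : β * ((x + z) * (x ^ 2 + z ^ 2)) = α * ((u + w) * (u ^ 2 + w ^ 2)) := by
    apply mul_left_cancel₀ (sub_ne_zero.2 hxz)
    linear_combination β * (h1 - h3) - (u + w) * (u ^ 2 + w ^ 2) * (l1 - l3)
  have e3 : β ^ 2 * ((x + y) ^ 2 + (y + z) ^ 2 + (x + z) ^ 2)
      + α ^ 2 * ((u + v) ^ 2 + (v + w) ^ 2 + (u + w) ^ 2) = 0 := by
    apply mul_left_cancel₀ (sub_ne_zero.2 hyz)
    linear_combination 2 * β * (e1 - e2)
      + α * ((u + v) ^ 2 + (v + w) ^ 2 + (u + w) ^ 2) * (l2 - l3)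
  have hb : 0 < β ^ 2 := by positivity
  have hs : 0 < (x + y) ^ 2 + (y + z) ^ 2 + (x + z) ^ 2 := by
    have : x + y ≠ 0 ∨ x + z ≠ 0 := by
      by_contra! hc
      exact hyz (by linarith)
    rcases this with h | h <;> positivity
  have : 0 < β ^ 2 * ((x + y) ^ 2 + (y + z) ^ 2 + (x + z) ^ 2)
      + α ^ 2 * ((u + v) ^ 2 + (v + w) ^ 2 + (u + w) ^ 2) := by positivity
  linarith

lemma aux_inj (α β c x y u v : ℝ) (hβ : β ≠ 0) (l1 : α * x + β * u = c)
    (l2 : α * y + β * v = c) (h : (x, u) ≠ (y, v)) : x ≠ y := by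
  rintro rfl
  apply h
  have : u = v := mul_left_cancel₀ hβ (by linarith)
  rw [this]

theorem stmt_10 (α β c : ℝ) (h : (α, β) ≠ (0, 0)) :
    {xy : ℝ × ℝ | xy.1 ^ 4 + xy.2 ^ 4 = 1 ∧ α * xy.1 + β * xy.2 = c}.encard ≤ 2 := by
  by_contra! hc
  obtain ⟨t, ht, htc⟩ := Set.exists_subset_encard_eq (k := 3) (Order.add_one_le_of_lt hc)
  obtain ⟨⟨x, u⟩, ⟨y, v⟩, ⟨z, w⟩, n1, n2, n3, rfl⟩ := Set.encard_eq_three.1 htc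
  obtain ⟨h1, l1⟩ := ht (show (x, u) ∈ _ by simp)
  obtain ⟨h2, l2⟩ := ht (show (y, v) ∈ _ by simp)
  obtain ⟨h3, l3⟩ := ht (show (z, w) ∈ _ by simp)
  dsimp only at h1 h2 h3 l1 l2 l3
  by_cases hβ : β = 0
  · have hα : α ≠ 0 := by
      rintro rfl
      exact h (by rw [hβ])
    rw [add_comm] at h1 h2 h3 l1 l2 l3
    have sw : ∀ {a b d e : ℝ}, (a, b) ≠ (d, e) → (b, a) ≠ (e, d) := by
      intro a b d e hn he
      simp only [Prod.mk.injEq] at he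
      exact hn (by rw [he.1, he.2])
    exact aux_three β α c u v w x y z hα h1 h2 h3 l1 l2 l3
      (aux_inj _ _ _ _ _ _ _ hα l1 l2 (sw n1)) (aux_inj _ _ _ _ _ _ _ hα l1 l3 (sw n2))
      (aux_inj _ _ _ _ _ _ _ hα l2 l3 (sw n3))
  · exact aux_three α β c x y z u v w hβ h1 h2 h3 l1 l2 l3
      (aux_inj _ _ _ _ _ _ _ hβ l1 l2 n1) (aux_inj _ _ _ _ _ _ _ hβ l1 l3 n2)
      (aux_inj _ _ _ _ _ _ _ hβ l2 l3 n3)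
end
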